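/- Assume S has finite VC dimension V and S' ⊆ S is a countable subset given by the separability assumption (every g ∈ S is a pointwise limit, in the loss r_SAR, of a sequence from S'). Assume the propensity satisfies e(x) ≥ e_m > 0, set C_e = 2/e_m − 1 and d(g,g') = √(2·C_e)·√(E[|g(X) − g'(X)|²]). Then there exists an absolute constant K ≥ 1 such that the function Φ(σ) = K·σ·√(V·(1 + log(max(C_e/σ, 1)))) satisfies √n·E[sup_{g ∈ S', d(g,g₀) ≤ σ} ( R̄_n^SAR(g₀) − R̄_n^SAR(g) )] ≤ Φ(σ) for all g₀ ∈ S' and every σ > 0 such that Φ(σ) ≤ √n·σ²/C_e, where R̄_n^SAR(g) = R̂_n^SAR(g) − P(g(X) ≠ Y) is the centered empirical SAR risk. -/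

import Mathlib

open MeasureTheory ProbabilityTheory Real Filter Topology

noncomputable section

/-- A classifier: a measurable `{0,1}`-valued function on the feature space. -/
def IsClassifier {α : Type*} [MeasurableSpace α] (g : α → ℝ) : Prop :=
  Measurable g ∧ ∀ x, g x = 0 ∨ g x = 1

/-- `η` is a version of the regression function `x ↦ P(Y = 1 ∣ X = x)`. -/
def IsRegression {Ω α : Type*} [MeasurableSpace Ω] [MeasurableSpace α]
    (P : Measure Ω) (X : Ω → α) (Y : Ω → ℝ) (η : α → ℝ) : Prop :=
  Measurable η ∧ (∀ x, 0 ≤ η x ∧ η x ≤ 1) ∧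
    ∀ A : Set α, MeasurableSet A →
      ∫ ω in X ⁻¹' A, Y ω ∂P = ∫ ω in X ⁻¹' A, η (X ω) ∂P

/-- `e` is the propensity: `P(S = 1 ∣ Y = 1, X = x) = e x` and
`P(S = 1 ∣ Y = 0, X = x) = 0` (the latter is equivalent to `S ≤ Y` a.s.). -/
def IsPropensity {Ω α : Type*} [MeasurableSpace Ω] [MeasurableSpace α]
    (P : Measure Ω) (X : Ω → α) (Y S : Ω → ℝ) (e : α → ℝ) : Prop :=
  Measurable e ∧ (∀ x, 0 ≤ e x ∧ e x ≤ 1) ∧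
    (∀ᵐ ω ∂P, S ω ≤ Y ω) ∧
    ∀ A : Set α, MeasurableSet A →
      ∫ ω in X ⁻¹' A, S ω ∂P = ∫ ω in X ⁻¹' A, e (X ω) * Y ω ∂P

/-- Misclassification risk `R(g) = P(g(X) ≠ Y)`. -/
def risk {Ω α : Type*} [MeasurableSpace Ω]
    (P : Measure Ω) (X : Ω → α) (Y : Ω → ℝ) (g : α → ℝ) : ℝ :=
  (P {ω | g (X ω) ≠ Y ω}).toReal

/-- The Bayes classifier `g*(x) = 1{η(x) ≥ 1/2}`. -/
def bayes {α : Type*} (η : α → ℝ) : α → ℝ := fun x => if (1 : ℝ) / 2 ≤ η x then 1 else 0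

/-- Excess risk `ℓ(g, g*) = R(g) − R(g*)`. -/
def excessRisk {Ω α : Type*} [MeasurableSpace Ω]
    (P : Measure Ω) (X : Ω → α) (Y : Ω → ℝ) (η : α → ℝ) (g : α → ℝ) : ℝ :=
  risk P X Y g - risk P X Y (bayes η)

/-- The SAR loss `r_SAR(g,(x,s)) = (1{s=1}/e(x))·(2·1{g(x)≠1} − 1) + 1{g(x)≠0}`. -/
def rSAR {α : Type*} (e : α → ℝ) (g : α → ℝ) (p : α × ℝ) : ℝ :=
  (if p.2 = 1 then (1 : ℝ) else 0) / e p.1 * (2 * (if g p.1 ≠ 1 then (1 : ℝ) else 0) - 1)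
    + (if g p.1 ≠ 0 then (1 : ℝ) else 0)

/-- Empirical risk `(1/n)·Σ_{i=1}^n r(g,(X_i,S_i))` of a generic loss `r` on an `n`-sample. -/
def empRisk {Ω α : Type*} (r : (α → ℝ) → α × ℝ → ℝ) (X : Ω → α) (S : Ω → ℝ) (n : ℕ)
    (g : α → ℝ) (ω : Fin n → Ω) : ℝ :=
  (1 / (n : ℝ)) * ∑ i : Fin n, r g (X (ω i), S (ω i))

/-- A finite set of points is shattered by the class `𝒮`: every labeling is realized. -/
def Shatters {α : Type*} (𝒮 : Set (α → ℝ)) {k : ℕ} (x : Fin k → α) : Prop :=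
  ∀ b : Fin k → Bool, ∃ g ∈ 𝒮, ∀ i, g (x i) = if b i then 1 else 0

/-- The class `𝒮` has VC dimension exactly `V`. -/
def HasVCDim {α : Type*} (𝒮 : Set (α → ℝ)) (V : ℕ) : Prop :=
  (∃ x : Fin V → α, Shatters 𝒮 x) ∧ ∀ x : Fin (V + 1) → α, ¬ Shatters 𝒮 x

/-- Separability assumption (A₁): a countable subclass `𝒮' ⊆ 𝒮` that is dense in
the sense of pointwise convergence of the loss `r`. -/
def SeparableClass {α : Type*} (r : (α → ℝ) → α × ℝ → ℝ) (𝒮 𝒮' : Set (α → ℝ)) : Prop :=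
  𝒮' ⊆ 𝒮 ∧ 𝒮'.Countable ∧
    ∀ g ∈ 𝒮, ∃ u : ℕ → α → ℝ, (∀ k, u k ∈ 𝒮') ∧
      ∀ p : α × ℝ, Tendsto (fun k => r (u k) p) atTop (𝓝 (r g p))

/-- The set of admissible distributions for the minimax risk: `μ` is the joint law of
`(X, Y, S)`, with regression function `η` satisfying the Massart noise condition with
margin `h`, Bayes classifier in `𝒮`, and propensity `e`. -/
def PUAdmissible {α : Type*} [MeasurableSpace α] (e : α → ℝ) (𝒮 : Set (α → ℝ)) (h : ℝ)
    (μ : Measure (α × ℝ × ℝ)) (η : α → ℝ) : Prop :=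
  IsProbabilityMeasure μ ∧
    (∀ᵐ p ∂μ, (p.2.1 = 0 ∨ p.2.1 = 1) ∧ (p.2.2 = 0 ∨ p.2.2 = 1)) ∧
    IsRegression μ (fun p => p.1) (fun p => p.2.1) η ∧
    IsPropensity μ (fun p => p.1) (fun p => p.2.1) (fun p => p.2.2) e ∧
    bayes η ∈ 𝒮 ∧ (∀ x, h ≤ |2 * η x - 1|)

/-- Minimax risk: infimum over estimators (functions of the observed `(X_i, S_i)` sample,
valued in `𝒮`) of the supremum over admissible distributions of the expected excess risk. -/
def minimaxRisk {α : Type*} [MeasurableSpace α] (e : α → ℝ) (𝒮 : Set (α → ℝ)) (h : ℝ)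
    (n : ℕ) : ℝ :=
  ⨅ ghat : {f : (Fin n → α × ℝ) → α → ℝ // ∀ z, f z ∈ 𝒮},
    ⨆ q : {q : Measure (α × ℝ × ℝ) × (α → ℝ) // PUAdmissible e 𝒮 h q.1 q.2},
      ∫ z, excessRisk q.1.1 (fun p => p.1) (fun p => p.2.1) q.1.2 (ghat.1 z)
        ∂(Measure.pi fun _ : Fin n => q.1.1.map (fun p => (p.1, p.2.2)))


lemma sauer_aux {α : Type*} (G : Finset (α → ℝ)) (h01 : ∀ g ∈ G, ∀ x, g x = 0 ∨ g x = 1)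
    (V : ℕ) (hV : ∀ x : Fin (V + 1) → α, ¬ Shatters (G : Set (α → ℝ)) x) (m : ℕ) (y : Fin m → α)
    (hinj : ∀ g ∈ G, ∀ g' ∈ G, (∀ j, g (y j) = g' (y j)) → g = g') :
    G.card ≤ ∑ k ∈ Finset.range (V + 1), m.choose k := by
  classical
  set pat : (α → ℝ) → Finset (Fin m) := fun g => Finset.univ.filter (fun j => g (y j) = 1) with hpat
  set A := G.image pat with hA
  have hcard : A.card = G.card := by
    apply Finset.card_image_of_injOn
    intro g hg g' hg' h
    apply hinj g hg g' hg'
    intro j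
    have hj : (j ∈ pat g) ↔ (j ∈ pat g') := by
      rw [h]
    simp only [hpat, Finset.mem_filter, Finset.mem_univ, true_and] at hj
    rcases h01 g hg (y j) with h1 | h1 <;> rcases h01 g' hg' (y j) with h2 | h2 <;>
      simp_all
  have hvc : A.vcDim ≤ V := by
    unfold Finset.vcDim
    apply Finset.sup_le
    intro s hs
    rw [Finset.mem_shatterer] at hs
    by_contra hcon
    push Not at hcon
    obtain ⟨t, hts, htc⟩ := Finset.exists_subset_card_eq (show V + 1 ≤ s.card from hcon)
    have hst := hs.mono_right hts
    let em := t.orderEmbOfFin htc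
    apply hV (fun i => y (em i))
    intro b
    obtain ⟨u, hu, hu2⟩ := hst (t := (Finset.univ.filter (fun i => b i = true)).image em) (by
      intro z hz
      simp only [Finset.mem_image] at hz
      obtain ⟨i, -, rfl⟩ := hz
      exact Finset.orderEmbOfFin_mem t htc i)
    obtain ⟨g, hg, rfl⟩ := Finset.mem_image.1 hu
    refine ⟨g, hg, fun i => ?_⟩
    have hm : em i ∈ t := Finset.orderEmbOfFin_mem t htc i
    have h1 : em i ∈ t ∩ pat g ↔ em i ∈ (Finset.univ.filter (fun i => b i = true)).image em := by
      rw [hu2]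
    simp only [Finset.mem_inter, hm, true_and, hpat, Finset.mem_filter, Finset.mem_univ,
      Finset.mem_image, EmbeddingLike.apply_eq_iff_eq, exists_eq_right] at h1
    rcases h01 g hg (y (em i)) with h2 | h2
    · by_cases hb : b i = true
      · simp_all
      · simp [hb, h2]
    · simp [h1.1 h2, h2]
  calc G.card = A.card := hcard.symm
    _ ≤ A.shatterer.card := Finset.card_le_card_shatterer A
    _ ≤ ∑ k ∈ Finset.Iic A.vcDim, (Fintype.card (Fin m)).choose k :=
        Finset.card_shatterer_le_sum_vcDim
    _ ≤ ∑ k ∈ Finset.range (V + 1), m.choose k := by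
        rw [Fintype.card_fin]
        apply Finset.sum_le_sum_of_subset
        intro k hk
        simp only [Finset.mem_Iic, Finset.mem_range] at *
        omega

lemma choose_sum_le (V m : ℕ) (x : ℝ) (hx : 0 < x) (hx1 : x ≤ 1) :
    ((∑ k ∈ Finset.range (V + 1), m.choose k : ℕ) : ℝ) ≤ (1 / x) ^ V * Real.exp (x * m) := by
  have h1 : (∑ k ∈ Finset.range (m + 1), (m.choose k : ℝ) * x ^ k) = (1 + x) ^ m := by
    rw [add_comm 1 x, add_pow]
    apply Finset.sum_congr rfl
    intro k _
    simp [mul_comm]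
  have h2 : (∑ k ∈ Finset.range (V + 1), (m.choose k : ℝ) * x ^ k) ≤
      ∑ k ∈ Finset.range (m + 1), (m.choose k : ℝ) * x ^ k := by
    calc _ ≤ ∑ k ∈ Finset.range (V + 1 + (m + 1)), (m.choose k : ℝ) * x ^ k := by
          apply Finset.sum_le_sum_of_subset_of_nonneg
          · intro k hk
            simp at *
            omega
          · intros; positivity
      _ = _ := by
          symm
          apply Finset.sum_subset
          · intro k hk
            simp at *
            omega
          · intro k _ hk
            simp only [Finset.mem_range, not_lt] at hk
            rw [Nat.choose_eq_zero_of_lt (by omega)]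
            simp
  have h3 : (1 + x) ^ m ≤ Real.exp (x * m) := by
    rw [mul_comm, Real.exp_nat_mul]
    gcongr
    linarith [Real.add_one_le_exp x]
  have h4 : ((∑ k ∈ Finset.range (V + 1), m.choose k : ℕ) : ℝ) ≤
      (1 / x) ^ V * ∑ k ∈ Finset.range (V + 1), (m.choose k : ℝ) * x ^ k := by
    push_cast
    rw [Finset.mul_sum]
    apply Finset.sum_le_sum
    intro k hk
    have hk' : k ≤ V := by simp at hk; omega
    have : x ^ V ≤ x ^ k := pow_le_pow_of_le_one hx.le hx1 hk'
    have hxV : 0 < x ^ V := by positivity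
    rw [one_div, inv_pow]
    calc (m.choose k : ℝ) = (x ^ V)⁻¹ * (m.choose k * x ^ V) := by field_simp
      _ ≤ _ := by gcongr
  calc _ ≤ _ := h4
    _ ≤ (1 / x) ^ V * Real.exp (x * m) := by
      gcongr
      linarith

lemma packing_aux {n : ℕ} (hn : 0 < n) (G : Finset (Fin n → ℝ))
    (h01 : ∀ g ∈ G, ∀ x, g x = 0 ∨ g x = 1)
    (V : ℕ) (hV : ∀ x : Fin (V + 1) → Fin n, ¬ Shatters (G : Set (Fin n → ℝ)) x)
    (δ : ℝ) (hδ : 0 < δ) (hδ1 : δ ≤ 1)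
    (hsep : ∀ g ∈ G, ∀ g' ∈ G, g ≠ g' →
      δ * n ≤ ((Finset.univ.filter (fun k => g k ≠ g' k)).card : ℝ)) :
    Real.log G.card ≤ 2 * V * Real.log (4 / δ) + 1 / 2 := by
  classical
  have hlog4 : 0 ≤ Real.log (4 / δ) := Real.log_nonneg (by rw [le_div_iff₀ hδ]; linarith)
  rcases Nat.eq_zero_or_pos G.card with h0 | hM
  · rw [h0]; simp; positivity
  have hMr : (1 : ℝ) ≤ G.card := by exact_mod_cast hM
  have hlogM : 0 ≤ Real.log G.card := Real.log_nonneg hMr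
  set m := ⌊2 * Real.log G.card / δ⌋₊ + 1 with hm
  have hm1 : 2 * Real.log G.card / δ < m := by
    rw [hm]; push_cast; exact Nat.lt_floor_add_one _
  have hm2 : (m : ℝ) ≤ 2 * Real.log G.card / δ + 1 := by
    rw [hm]; push_cast
    have := Nat.floor_le (show 0 ≤ 2 * Real.log G.card / δ by positivity)
    linarith
  have hlt : (G.card : ℝ) ^ 2 * Real.exp (-(δ * m)) < 1 := by
    have : (G.card : ℝ) ^ 2 = Real.exp (2 * Real.log G.card) := by
      rw [mul_comm, Real.exp_mul, Real.exp_log (by linarith)]; norm_cast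
    rw [this, ← Real.exp_add, Real.exp_lt_one_iff]
    rw [div_lt_iff₀ hδ] at hm1
    linarith
  obtain ⟨φ, hφ⟩ : ∃ φ : Fin m → Fin n, ∀ g ∈ G, ∀ g' ∈ G, (∀ j, g (φ j) = g' (φ j)) → g = g' := by
    by_contra hcon
    push Not at hcon
    have hcov : (Finset.univ : Finset (Fin m → Fin n)) ⊆ G.offDiag.biUnion (fun p =>
        Fintype.piFinset (fun _ : Fin m => Finset.univ.filter (fun k => p.1 k = p.2 k))) := by
      intro φ _
      obtain ⟨g, hg, g', hg', h1, h2⟩ := hcon φ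
      rw [Finset.mem_biUnion]
      refine ⟨(g, g'), ?_, ?_⟩
      · simp [hg, hg', h2]
      · simpa using h1
    have h1 := (Finset.card_le_card hcov).trans Finset.card_biUnion_le
    rw [Finset.card_univ, Fintype.card_fun, Fintype.card_fin, Fintype.card_fin] at h1
    have h2 : ((n : ℝ)) ^ m ≤ ∑ p ∈ G.offDiag,
        ((Fintype.piFinset (fun _ : Fin m => Finset.univ.filter
          (fun k => p.1 k = p.2 k))).card : ℝ) := by exact_mod_cast h1
    have h3 : ∀ p ∈ G.offDiag, ((Fintype.piFinset (fun _ : Fin m => Finset.univ.filter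
          (fun k => p.1 k = p.2 k))).card : ℝ) ≤ n ^ m * Real.exp (-(δ * m)) := by
      intro p hp
      rw [Finset.mem_offDiag] at hp
      rw [Fintype.card_piFinset_const]
      have hs := hsep p.1 hp.1 p.2 hp.2.1 hp.2.2
      have hadd := Finset.card_filter_add_card_filter_not (s := (Finset.univ : Finset (Fin n)))
        (fun k => p.1 k = p.2 k)
      rw [Finset.card_univ, Fintype.card_fin] at hadd
      have hadd' : ((Finset.univ.filter (fun k => p.1 k = p.2 k)).card : ℝ) +
        ((Finset.univ.filter (fun k => p.1 k ≠ p.2 k)).card : ℝ) = n := by exact_mod_cast hadd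
      have hle : ((Finset.univ.filter (fun k => p.1 k = p.2 k)).card : ℝ) ≤
          n * Real.exp (-δ) := by
        have := Real.add_one_le_exp (-δ)
        have hn' : (0 : ℝ) ≤ n := by positivity
        nlinarith
      push_cast
      calc _ ≤ (n * Real.exp (-δ)) ^ m := by gcongr
        _ = _ := by
          rw [mul_pow, ← Real.exp_nat_mul]; ring_nf
    have h4 := h2.trans (Finset.sum_le_sum h3)
    rw [Finset.sum_const, nsmul_eq_mul] at h4
    have h5 : (G.offDiag.card : ℝ) ≤ (G.card : ℝ) ^ 2 := by
      have : G.offDiag.card ≤ G.card ^ 2 := by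
        rw [Finset.offDiag_card, sq]; omega
      exact_mod_cast this
    have hnm : (0 : ℝ) < n ^ m := by positivity
    have h6 : (n : ℝ) ^ m ≤ n ^ m * ((G.card : ℝ) ^ 2 * Real.exp (-(δ * m))) := by
      calc _ ≤ _ := h4
        _ ≤ (G.card : ℝ) ^ 2 * (n ^ m * Real.exp (-(δ * m))) := by gcongr
        _ = _ := by ring
    nlinarith
  have hS := sauer_aux G h01 V hV m φ hφ
  have hS2 : (G.card : ℝ) ≤ (1 / (δ / 4)) ^ V * Real.exp (δ / 4 * m) :=
    le_trans (by exact_mod_cast hS) (choose_sum_le V m (δ / 4) (by positivity) (by linarith))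
  have hS3 := Real.log_le_log (by linarith) hS2
  rw [Real.log_mul (by positivity) (by positivity), Real.log_exp, Real.log_pow,
    show 1 / (δ / 4) = 4 / δ by field_simp] at hS3
  have h7 : δ / 4 * m ≤ Real.log G.card / 2 + 1 / 4 := by
    calc δ / 4 * m ≤ δ / 4 * (2 * Real.log G.card / δ + 1) := by gcongr
      _ = Real.log G.card / 2 + δ / 4 := by field_simp; ring
      _ ≤ _ := by linarith
  linarith

def radSgn (b : Bool) : ℝ := if b then 1 else -1

def radAvg {n : ℕ} (F : (Fin n → Bool) → ℝ) : ℝ := (∑ ε, F ε) / 2 ^ n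

lemma radAvg_mono {n : ℕ} {F G : (Fin n → Bool) → ℝ} (h : ∀ ε, F ε ≤ G ε) :
    radAvg F ≤ radAvg G := by
  unfold radAvg
  gcongr with ε
  exact h ε

lemma radAvg_add {n : ℕ} (F G : (Fin n → Bool) → ℝ) :
    radAvg (fun ε => F ε + G ε) = radAvg F + radAvg G := by
  unfold radAvg
  rw [Finset.sum_add_distrib, add_div]

lemma radAvg_const {n : ℕ} (c : ℝ) : radAvg (fun _ : Fin n → Bool => c) = c := by
  unfold radAvg
  simp

lemma rad_mgf {n : ℕ} (t : Fin n → ℝ) :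
    radAvg (fun ε : Fin n → Bool => Real.exp (∑ k, radSgn (ε k) * t k)) ≤
      Real.exp ((∑ k, t k ^ 2) / 2) := by
  have h1 : ∑ ε : Fin n → Bool, Real.exp (∑ k, radSgn (ε k) * t k) =
      ∏ k, (Real.exp (t k) + Real.exp (-t k)) := by
    have := Finset.prod_univ_sum (fun _ : Fin n => (Finset.univ : Finset Bool))
      (fun k b => Real.exp (radSgn b * t k))
    rw [Fintype.piFinset_univ] at this
    simp only [Real.exp_sum]
    rw [← this]
    apply Finset.prod_congr rfl
    intro k _
    simp [radSgn]
  unfold radAvg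
  rw [h1]
  have h2 : (2 : ℝ) ^ n = ∏ _k : Fin n, (2 : ℝ) := by simp
  rw [h2, ← Finset.prod_div_distrib, Finset.sum_div, Real.exp_sum]
  apply Finset.prod_le_prod
  · intros; positivity
  · intro k _
    rw [← Real.cosh_eq]
    exact Real.cosh_le_exp_half_sq _

lemma massart_aux {n : ℕ} {ι : Type*} (T : Finset ι) (hT : T.Nonempty) (t : ι → Fin n → ℝ)
    (ρ L : ℝ) (hρ : 0 < ρ) (hL : 0 < L) (ht : ∀ a ∈ T, ∑ k, t a k ^ 2 ≤ ρ ^ 2)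
    (hcard : Real.log T.card ≤ L) :
    radAvg (fun ε => T.sup' hT (fun a => ∑ k, radSgn (ε k) * t a k)) ≤ ρ * √(2 * L) := by
  classical
  set M : (Fin n → Bool) → ℝ := fun ε => T.sup' hT (fun a => ∑ k, radSgn (ε k) * t a k) with hM
  set lam := √(2 * L) / ρ with hlam
  have hs : 0 < √(2 * L) := Real.sqrt_pos.2 (by positivity)
  have hlam0 : 0 < lam := by positivity
  have hTc : (1 : ℝ) ≤ T.card := by exact_mod_cast hT.card_pos
  have h1 : Real.exp (radAvg (fun ε => lam * M ε)) ≤ radAvg (fun ε => Real.exp (lam * M ε)) := by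
    have := convexOn_exp.map_sum_le (t := Finset.univ) (w := fun _ : Fin n → Bool => (1 : ℝ) / 2 ^ n)
      (p := fun ε => lam * M ε) (by intros; positivity) (by simp) (by simp)
    simp only [smul_eq_mul, ← Finset.mul_sum] at this
    unfold radAvg
    rw [one_div_mul_eq_div, one_div_mul_eq_div] at this
    simpa only [← Finset.mul_sum] using this
  have h2 : radAvg (fun ε => Real.exp (lam * M ε)) ≤ T.card * Real.exp (L) := by
    calc _ ≤ radAvg (fun ε => ∑ a ∈ T, Real.exp (∑ k, radSgn (ε k) * (lam * t a k))) := by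
          apply radAvg_mono
          intro ε
          obtain ⟨a, ha, hae⟩ := T.exists_mem_eq_sup' hT (fun a => ∑ k, radSgn (ε k) * t a k)
          have : lam * M ε = ∑ k, radSgn (ε k) * (lam * t a k) := by
            simp only [hM]
            rw [hae, Finset.mul_sum]
            apply Finset.sum_congr rfl
            intros; ring
          rw [this]
          exact Finset.single_le_sum (f := fun a => Real.exp (∑ k, radSgn (ε k) * (lam * t a k)))
            (fun _ _ => (Real.exp_pos _).le) ha
      _ = ∑ a ∈ T, radAvg (fun ε => Real.exp (∑ k, radSgn (ε k) * (lam * t a k))) := by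
          unfold radAvg
          rw [Finset.sum_comm, Finset.sum_div]
      _ ≤ ∑ a ∈ T, Real.exp L := by
          apply Finset.sum_le_sum
          intro a ha
          refine (rad_mgf _).trans ?_
          apply Real.exp_le_exp.2
          have : ∑ k, (lam * t a k) ^ 2 = lam ^ 2 * ∑ k, t a k ^ 2 := by
            rw [Finset.mul_sum]; apply Finset.sum_congr rfl; intros; ring
          rw [this]
          have h3 : lam ^ 2 * ∑ k, t a k ^ 2 ≤ lam ^ 2 * ρ ^ 2 := by
            gcongr; exact ht a ha
          have h4 : lam ^ 2 * ρ ^ 2 = 2 * L := by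
            rw [hlam, div_pow, Real.sq_sqrt (by positivity)]; field_simp
          linarith
      _ = _ := by simp
  have h3 : radAvg (fun ε => lam * M ε) = lam * radAvg M := by
    unfold radAvg; rw [← Finset.mul_sum]; ring
  rw [h3] at h1
  have h4 := Real.log_le_log (Real.exp_pos _) (h1.trans h2)
  rw [Real.log_exp, Real.log_mul (by positivity) (by positivity), Real.log_exp] at h4
  have h5 : lam * radAvg M ≤ lam * (ρ * √(2 * L)) := by
    have : lam * (ρ * √(2 * L)) = 2 * L := by
      rw [hlam]
      field_simp
      rw [Real.sq_sqrt (by positivity)]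
    linarith
  exact le_of_mul_le_mul_left h5 hlam0

lemma net_aux {n : ℕ} (A : Finset (Fin n → ℝ)) (d : ℝ) :
    ∃ N ⊆ A, (∀ g ∈ N, ∀ g' ∈ N, g ≠ g' →
      d ≤ ((Finset.univ.filter (fun k => g k ≠ g' k)).card : ℝ)) ∧
      ∀ a ∈ A, ∃ b ∈ N, a = b ∨ ((Finset.univ.filter (fun k => a k ≠ b k)).card : ℝ) < d := by
  classical
  set F := A.powerset.filter (fun N => ∀ g ∈ N, ∀ g' ∈ N, g ≠ g' →
      d ≤ ((Finset.univ.filter (fun k => g k ≠ g' k)).card : ℝ)) with hF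
  have hne : F.Nonempty := ⟨∅, by simp [hF]⟩
  obtain ⟨N, hN, hmax⟩ := F.exists_max_image Finset.card hne
  rw [hF, Finset.mem_filter, Finset.mem_powerset] at hN
  refine ⟨N, hN.1, hN.2, ?_⟩
  intro a ha
  by_contra hcon
  push Not at hcon
  have haN : a ∉ N := fun h => (hcon a h).1 rfl
  have hins : insert a N ∈ F := by
    rw [hF, Finset.mem_filter, Finset.mem_powerset]
    refine ⟨Finset.insert_subset ha hN.1, ?_⟩
    intro g hg g' hg' hgg
    rw [Finset.mem_insert] at hg hg'
    rcases hg with rfl | hg <;> rcases hg' with rfl | hg'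
    · exact absurd rfl hgg
    · exact (hcon g' hg').2
    · have := (hcon g hg).2
      simpa [ne_comm] using this
    · exact hN.2 g hg g' hg' hgg
  have := hmax _ hins
  rw [Finset.card_insert_of_notMem haN] at this
  omega

lemma dist_aux {n : ℕ} (a b v : Fin n → ℝ) (ha : ∀ k, a k = 0 ∨ a k = 1)
    (hb : ∀ k, b k = 0 ∨ b k = 1) (B : ℝ) (hv : ∀ k, |v k| ≤ B) :
    ∑ k, ((a k - b k) * v k) ^ 2 ≤
      B ^ 2 * ((Finset.univ.filter (fun k => a k ≠ b k)).card : ℝ) := by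
  classical
  rw [Finset.card_filter]
  push_cast
  rw [Finset.mul_sum]
  apply Finset.sum_le_sum
  intro k _
  have h := hv k
  have h2 : v k ^ 2 ≤ B ^ 2 := by
    rw [← sq_abs]; gcongr
  rcases ha k with h1 | h1 <;> rcases hb k with h3 | h3 <;> simp [h1, h3, h2]

lemma chain_aux {n : ℕ} (hn : 0 < n) (A : Finset (Fin n → ℝ))
    (h01 : ∀ g ∈ A, ∀ x, g x = 0 ∨ g x = 1)
    (V : ℕ) (hV0 : 0 < V) (hV : ∀ x : Fin (V + 1) → Fin n, ¬ Shatters (A : Set (Fin n → ℝ)) x)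
    (a₀ : Fin n → ℝ) (ha₀ : a₀ ∈ A) (v : Fin n → ℝ) (B R : ℝ) (hR : 0 < R) (hRB : R ≤ B)
    (hv : ∀ k, |v k| ≤ B)
    (hrad : ∀ a ∈ A, ∑ k, ((a k - a₀ k) * v k) ^ 2 ≤ n * R ^ 2) :
    radAvg (fun ε => A.sup' ⟨a₀, ha₀⟩ (fun a => ∑ k, radSgn (ε k) * ((a k - a₀ k) * v k))) ≤
      28 * R * √(n * (V * (1 + Real.log (B / R)))) := by
  classical
  have hB : 0 < B := lt_of_lt_of_le hR hRB
  have hlog0 : 0 ≤ Real.log (B / R) := Real.log_nonneg (by rw [le_div_iff₀ hR]; linarith)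
  set ℓ := 1 + Real.log (B / R) with hℓ
  have hℓ1 : 1 ≤ ℓ := by linarith
  have hVr : (1 : ℝ) ≤ V := by exact_mod_cast hV0
  have hnr : (0 : ℝ) < n := by exact_mod_cast hn
  set D := √(n * (V * ℓ)) with hD
  set X : (Fin n → ℝ) → (Fin n → Bool) → ℝ :=
    fun a ε => ∑ k, radSgn (ε k) * ((a k - a₀ k) * v k) with hX
  set δ : ℕ → ℝ := fun j => (R / B) ^ 2 / 4 ^ j with hδ
  have hδpos : ∀ j, 0 < δ j := fun j => by positivity
  have hδ1 : ∀ j, δ j ≤ 1 := fun j => by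
    have h1 : (R / B) ^ 2 ≤ 1 := pow_le_one₀ (by positivity) (by rw [div_le_one hB]; exact hRB)
    have h2 : (1 : ℝ) ≤ 4 ^ j := one_le_pow₀ (by norm_num)
    simp only [hδ]
    rw [div_le_one (by positivity)]
    linarith
  choose N hNA hNsep hNnet using fun j : ℕ => net_aux A (δ j * n)
  have hNne : ∀ j, (N j).Nonempty := fun j => by
    obtain ⟨b, hb, -⟩ := hNnet j a₀ ha₀
    exact ⟨b, hb⟩
  have hNcard : ∀ j, Real.log (N j).card ≤ 8 * (V * ℓ) * ((j : ℝ) + 1) ^ 2 := by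
    intro j
    have h1 := packing_aux hn (N j) (fun g hg => h01 g (hNA j hg)) V (fun x hx => hV x (by
      intro b
      obtain ⟨g, hg, h⟩ := hx b
      exact ⟨g, hNA j hg, h⟩)) (δ j) (hδpos j) (hδ1 j) (hNsep j)
    have h2 : Real.log (4 / δ j) = Real.log 4 + 2 * Real.log (B / R) + j * Real.log 4 := by
      have : 4 / δ j = 4 * (B / R) ^ 2 * 4 ^ j := by
        simp only [hδ]; field_simp
      rw [this, Real.log_mul (by positivity) (by positivity),
        Real.log_mul (by positivity) (by positivity), Real.log_pow, Real.log_pow]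
      push_cast; ring
    have h3 : Real.log 4 ≤ 1.4 := by
      have : (4 : ℝ) = 2 ^ 2 := by norm_num
      rw [this, Real.log_pow]
      have := Real.log_two_lt_d9
      push_cast; linarith
    have hj : (0 : ℝ) ≤ j := by positivity
    have h4 : Real.log (4 / δ j) ≤ 3.4 * ℓ * (j + 1) := by
      rw [h2]
      have h5 : (j : ℝ) * Real.log 4 ≤ j * 1.4 := by gcongr
      have h6 : (0 : ℝ) ≤ j * (ℓ - 1) := mul_nonneg hj (by linarith)
      nlinarith
    have h7 : 2 * V * Real.log (4 / δ j) ≤ 2 * V * (3.4 * ℓ * (j + 1)) := by gcongr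
    have h8 : 1 ≤ V * ℓ := by nlinarith
    have h9 : 1 ≤ V * ℓ * ((j : ℝ) + 1) := by nlinarith
    have h10 : V * ℓ * ((j : ℝ) + 1) ≤ V * ℓ * ((j : ℝ) + 1) ^ 2 := by
      have : (j : ℝ) + 1 ≤ ((j : ℝ) + 1) ^ 2 := by nlinarith
      gcongr
    nlinarith
  -- main induction
  have key : ∀ J : ℕ, radAvg (fun ε => (N J).sup' (hNne J) (fun a => X a ε)) ≤
      4 * R * D * (7 - (2 * J + 6) / 2 ^ J) := by
    have step : ∀ (T T' : Finset (Fin n → ℝ)) (hT : T.Nonempty) (hT' : T'.Nonempty) (ρ L : ℝ),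
        0 < ρ → 0 < L → Real.log T'.card ≤ L →
        (∀ a ∈ T', ∃ b ∈ T, ∑ k, ((a k - b k) * v k) ^ 2 ≤ ρ ^ 2) →
        radAvg (fun ε => T'.sup' hT' (fun a => X a ε)) ≤
          radAvg (fun ε => T.sup' hT (fun a => X a ε)) + ρ * √(2 * L) := by
      intro T T' hT hT' ρ L hρ hL hc hnet
      have : ∀ a, ∃ b, a ∈ T' → b ∈ T ∧ ∑ k, ((a k - b k) * v k) ^ 2 ≤ ρ ^ 2 := by
        intro a
        by_cases ha : a ∈ T'
        · obtain ⟨b, hb⟩ := hnet a ha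
          exact ⟨b, fun _ => hb⟩
        · exact ⟨a, fun h => absurd h ha⟩
      choose pr hpr using this
      have hm := massart_aux T' hT' (fun a k => (a k - pr a k) * v k) ρ L hρ hL
        (fun a ha => (hpr a ha).2) hc
      refine le_trans ?_ (add_le_add_right hm _)
      rw [← radAvg_add]
      apply radAvg_mono
      intro ε
      apply Finset.sup'_le
      intro a ha
      have h1 : X a ε = X (pr a) ε + ∑ k, radSgn (ε k) * ((a k - pr a k) * v k) := by
        simp only [hX]
        rw [← Finset.sum_add_distrib]
        apply Finset.sum_congr rfl
        intros; ring
      rw [h1]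
      apply add_le_add
      · exact Finset.le_sup' (fun a => X a ε) (hpr a ha).1
      · exact Finset.le_sup' (fun a => ∑ k, radSgn (ε k) * ((a k - pr a k) * v k)) ha
    have hsq : ∀ (ρ c : ℝ), 0 ≤ c → ρ * √n * √(2 * (8 * (V * ℓ) * c ^ 2)) = 4 * ρ * D * c := by
      intro ρ c hc
      have : 2 * (8 * (V * ℓ) * c ^ 2) = (4 * c) ^ 2 * (V * ℓ) := by ring
      have hD' : D = √n * √(V * ℓ) := by rw [hD, Real.sqrt_mul hnr.le]
      rw [this, Real.sqrt_mul (by positivity), Real.sqrt_sq (by positivity), hD']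
      ring
    intro J
    induction J with
    | zero =>
      have h1 := step {a₀} (N 0) (by simp) (hNne 0) (R * √n) (8 * (V * ℓ) * 1 ^ 2)
        (by positivity) (by positivity) (by simpa using hNcard 0) (by
          intro a ha
          refine ⟨a₀, by simp, ?_⟩
          rw [mul_pow, Real.sq_sqrt hnr.le, mul_comm]
          exact hrad a (hNA 0 ha))
      rw [hsq _ _ (by norm_num)] at h1
      have h2 : radAvg (fun ε => ({a₀} : Finset (Fin n → ℝ)).sup' (by simp) (fun a => X a ε)) = 0 := by
        have : (fun ε => ({a₀} : Finset (Fin n → ℝ)).sup' (by simp) (fun a => X a ε)) =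
            fun _ => 0 := by
          funext ε
          simp [hX]
        rw [this, radAvg_const]
      rw [h2] at h1
      norm_num
      linarith
    | succ j ih =>
      have h1 := step (N j) (N (j + 1)) (hNne j) (hNne (j + 1)) (R / 2 ^ j * √n)
        (8 * (V * ℓ) * ((j + 1 : ℕ) + 1) ^ 2)
        (by positivity) (by positivity) (hNcard (j + 1)) (by
          intro a ha
          obtain ⟨b, hb, hab⟩ := hNnet j a (hNA _ ha)
          refine ⟨b, hb, ?_⟩
          rcases hab with rfl | hab
          · simp; positivity
          · refine (dist_aux a b v (h01 a (hNA _ ha)) (h01 b (hNA _ hb)) B hv).trans ?_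
            calc _ ≤ B ^ 2 * (δ j * n) := by gcongr
              _ = (R / 2 ^ j * √n) ^ 2 := by
                rw [mul_pow, Real.sq_sqrt hnr.le, div_pow, ← pow_mul, mul_comm j 2, pow_mul]
                simp only [hδ]
                norm_num
                field_simp)
      rw [hsq _ _ (by positivity)] at h1
      refine h1.trans ((add_le_add_left ih _).trans (le_of_eq ?_))
      push_cast
      rw [pow_succ]
      field_simp
      ring
  obtain ⟨J, hJ⟩ : ∃ J : ℕ, δ J * n < 1 := by
    obtain ⟨J, hJ⟩ := pow_unbounded_of_one_lt ((R / B) ^ 2 * n) (show (1 : ℝ) < 4 by norm_num)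
    refine ⟨J, ?_⟩
    simp only [hδ]
    rw [div_mul_eq_mul_div, div_lt_one (by positivity)]
    exact hJ
  have hAN : A ⊆ N J := by
    intro a ha
    obtain ⟨b, hb, hab⟩ := hNnet J a ha
    rcases hab with rfl | hab
    · exact hb
    · have h1 : (Finset.univ.filter (fun k => a k ≠ b k)).card = 0 := by
        have := hab.trans hJ
        have h2 : (Finset.univ.filter (fun k => a k ≠ b k)).card < 1 := by exact_mod_cast this
        omega
      rw [Finset.card_eq_zero, Finset.filter_eq_empty_iff] at h1
      have : a = b := by
        funext k
        by_contra hk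
        exact h1 (Finset.mem_univ k) hk
      rwa [this]
  calc _ ≤ radAvg (fun ε => (N J).sup' (hNne J) (fun a => X a ε)) := by
        apply radAvg_mono
        intro ε
        exact Finset.sup'_mono _ hAN _
    _ ≤ _ := key J
    _ ≤ 4 * R * D * 7 := by
        gcongr
        have : (0 : ℝ) ≤ (2 * J + 6) / 2 ^ J := by positivity
        linarith
    _ = _ := by ring

lemma radSgn_abs (b : Bool) : |radSgn b| = 1 := by
  cases b <;> simp [radSgn]

lemma integrable_of_bdd {Ω : Type*} [MeasurableSpace Ω] (P : Measure Ω) [IsProbabilityMeasure P]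
    {f : Ω → ℝ} (hf : Measurable f) (M : ℝ) (hM : ∀ ω, |f ω| ≤ M) : Integrable f P :=
  Integrable.of_bound hf.aestronglyMeasurable M (ae_of_all _ (by simpa using hM))

lemma abs_ciSup_le' {ι : Type*} [Nonempty ι] (f : ι → ℝ) (M : ℝ) (hM : ∀ i, |f i| ≤ M) :
    |⨆ i, f i| ≤ M := by
  have hb : BddAbove (Set.range f) := ⟨M, by rintro _ ⟨i, rfl⟩; exact (abs_le.1 (hM i)).2⟩
  rw [abs_le]
  constructor
  · obtain ⟨i⟩ := ‹Nonempty ι›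
    exact (abs_le.1 (hM i)).1.trans (le_ciSup hb i)
  · exact ciSup_le fun i => (abs_le.1 (hM i)).2

lemma bdd_of_abs {ι : Type*} (f : ι → ℝ) (M : ℝ) (hM : ∀ i, |f i| ≤ M) :
    BddAbove (Set.range f) := ⟨M, by rintro _ ⟨i, rfl⟩; exact (abs_le.1 (hM i)).2⟩

lemma abs_sum_le_card {n : ℕ} (f : Fin n → ℝ) (M : ℝ) (hM : ∀ i, |f i| ≤ M) :
    |∑ k, f k| ≤ n * M := by
  refine (Finset.abs_sum_le_sum_abs _ _).trans ((Finset.sum_le_sum (fun k _ => hM k)).trans ?_)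
  simp

lemma swap_mp {Ω : Type*} [MeasurableSpace Ω] (P : Measure Ω) [IsProbabilityMeasure P]
    {n : ℕ} (ε : Fin n → Bool) :
    MeasurePreserving (fun p : (Fin n → Ω) × (Fin n → Ω) =>
      ((fun k => if ε k then p.1 k else p.2 k, fun k => if ε k then p.2 k else p.1 k) :
        (Fin n → Ω) × (Fin n → Ω)))
      ((Measure.pi fun _ : Fin n => P).prod (Measure.pi fun _ : Fin n => P))
      ((Measure.pi fun _ : Fin n => P).prod (Measure.pi fun _ : Fin n => P)) := by
  have h1 := measurePreserving_arrowProdEquivProdArrow Ω Ω (Fin n) (fun _ => P) (fun _ => P)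
  have h2 : MeasurePreserving (fun (a : Fin n → Ω × Ω) k => (if ε k then id else Prod.swap) (a k))
      (Measure.pi fun _ : Fin n => P.prod P) (Measure.pi fun _ : Fin n => P.prod P) := by
    refine measurePreserving_pi (fun _ => P.prod P) (fun _ => P.prod P)
      (f := fun k => if ε k then id else Prod.swap) ?_
    intro k
    by_cases h : ε k = true
    · simp only [h, if_true]
      exact MeasurePreserving.id _
    · simp only [h]
      exact Measure.measurePreserving_swap
  have h3 := (h1.comp h2).comp h1.symm
  convert h3 using 1
  funext p
  simp only [Function.comp, MeasurableEquiv.arrowProdEquivProdArrow,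
    Equiv.arrowProdEquivProdArrow]
  ext k
  · by_cases h : ε k = true <;> simp [h]
  · by_cases h : ε k = true <;> simp [h]

lemma symm_aux {Ω : Type*} [MeasurableSpace Ω] (P : Measure Ω) [IsProbabilityMeasure P]
    {ι : Type*} [Countable ι] [Nonempty ι] (f : ι → Ω → ℝ) (hf : ∀ i, Measurable (f i))
    (M : ℝ) (hM : ∀ i ω, |f i ω| ≤ M) (n : ℕ) :
    ∫ ω, (⨆ i, ∑ k : Fin n, (f i (ω k) - ∫ ω', f i ω' ∂P)) ∂(Measure.pi fun _ : Fin n => P) ≤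
      2 * ∫ ω, radAvg (fun ε => ⨆ i, ∑ k : Fin n, radSgn (ε k) * f i (ω k))
        ∂(Measure.pi fun _ : Fin n => P) := by
  set Q : Measure (Fin n → Ω) := Measure.pi fun _ : Fin n => P with hQ
  have hfk : ∀ i (k : Fin n), Measurable fun ω : Fin n → Ω => f i (ω k) :=
    fun i k => (hf i).comp (measurable_pi_apply k)
  set H : (Fin n → Bool) → (Fin n → Ω) → ℝ :=
    fun ε ω => ⨆ i, ∑ k : Fin n, radSgn (ε k) * f i (ω k) with hH
  have hHb0 : ∀ (ε : Fin n → Bool) (ω : Fin n → Ω) i, |∑ k : Fin n, radSgn (ε k) * f i (ω k)| ≤ n * M := by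
    intro ε ω i
    apply abs_sum_le_card
    intro k
    rw [abs_mul, radSgn_abs, one_mul]
    exact hM i _
  have hHm : ∀ ε, Measurable (H ε) := fun ε =>
    Measurable.iSup fun i => Finset.measurable_sum _ fun k _ => (hfk i k).const_mul _
  have hHi : ∀ ε, Integrable (H ε) Q := fun ε =>
    integrable_of_bdd Q (hHm ε) (n * M) fun ω => abs_ciSup_le' _ _ (hHb0 ε ω)
  -- F
  set F : (Fin n → Ω) × (Fin n → Ω) → ℝ := fun p => ⨆ i, ∑ k : Fin n, (f i (p.1 k) - f i (p.2 k))
    with hF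
  have hd : ∀ i (a b : Ω), |f i a - f i b| ≤ 2 * M := fun i a b =>
    (abs_sub _ _).trans (by linarith [hM i a, hM i b])
  have hFb0 : ∀ (p : (Fin n → Ω) × (Fin n → Ω)) i,
      |∑ k : Fin n, (f i (p.1 k) - f i (p.2 k))| ≤ n * (2 * M) := fun p i =>
    abs_sum_le_card _ _ fun k => hd i _ _
  have hFm : Measurable F := Measurable.iSup fun i => Finset.measurable_sum _ fun k _ =>
    ((hfk i k).comp measurable_fst).sub ((hfk i k).comp measurable_snd)
  have hFb : ∀ p, |F p| ≤ n * (2 * M) := fun p => abs_ciSup_le' _ _ (hFb0 p)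
  have hFi : Integrable F (Q.prod Q) := integrable_of_bdd _ hFm _ hFb
  -- step a
  have ha : ∫ ω, (⨆ i, ∑ k : Fin n, (f i (ω k) - ∫ ω', f i ω' ∂P)) ∂Q ≤ ∫ p, F p ∂(Q.prod Q) := by
    rw [integral_prod _ hFi]
    have hIb : ∀ i, |∫ ω', f i ω' ∂P| ≤ M := fun i => by
      have := norm_integral_le_of_norm_le_const (μ := P) (f := f i) (C := M)
        (ae_of_all _ (by simpa using hM i))
      simpa using this
    apply integral_mono
    · apply integrable_of_bdd Q (M := n * (2 * M))
      · exact Measurable.iSup fun i => Finset.measurable_sum _ fun k _ => (hfk i k).sub_const _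
      · intro ω
        apply abs_ciSup_le'
        intro i
        apply abs_sum_le_card
        intro k
        exact (abs_sub _ _).trans (by linarith [hM i (ω k), hIb i])
    · exact hFi.integral_prod_left
    · intro ω
      apply ciSup_le
      intro i
      have hIntg : ∀ k, Integrable (fun ω' : Fin n → Ω => f i (ω k) - f i (ω' k)) Q := fun k =>
        integrable_of_bdd Q ((hfk i k).const_sub _) (2 * M) fun ω' => hd i _ _
      have h1 : ∑ k : Fin n, (f i (ω k) - ∫ ω', f i ω' ∂P) =
          ∫ ω', ∑ k : Fin n, (f i (ω k) - f i (ω' k)) ∂Q := by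
        rw [integral_finsetSum _ fun k _ => hIntg k]
        apply Finset.sum_congr rfl
        intro k _
        rw [integral_sub (integrable_const _)
          (integrable_of_bdd Q (hfk i k) M fun ω' => hM i _)]
        rw [hQ, integral_comp_eval (hf i).aestronglyMeasurable]
        simp
      rw [h1]
      apply integral_mono
      · exact integrable_finsetSum _ fun k _ => hIntg k
      · exact integrable_of_bdd Q (hFm.comp measurable_prodMk_left) _ fun ω' => hFb (ω, ω')
      · intro ω'
        exact le_ciSup (bdd_of_abs _ _ (hFb0 (ω, ω'))) i
  -- step b, c
  have hb : ∀ ε : Fin n → Bool, ∫ p, F p ∂(Q.prod Q) ≤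
      ∫ ω, H ε ω ∂Q + ∫ ω, H (fun k => !(ε k)) ω ∂Q := by
    intro ε
    have hsw := swap_mp P ε
    have h1 : ∫ p, F p ∂(Q.prod Q) = ∫ p : (Fin n → Ω) × (Fin n → Ω),
        F (fun k => if ε k then p.1 k else p.2 k, fun k => if ε k then p.2 k else p.1 k)
          ∂(Q.prod Q) := by
      conv_lhs => rw [← hsw.map_eq]
      rw [integral_map hsw.measurable.aemeasurable hFm.aestronglyMeasurable]
    have h2 : ∫ ω, H ε ω ∂Q = ∫ p : (Fin n → Ω) × (Fin n → Ω), H ε p.1 ∂(Q.prod Q) := by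
      rw [integral_fun_fst]; simp
    have h3 : ∫ ω, H (fun k => !(ε k)) ω ∂Q =
        ∫ p : (Fin n → Ω) × (Fin n → Ω), H (fun k => !(ε k)) p.2 ∂(Q.prod Q) := by
      rw [integral_fun_snd]; simp
    have i2 : Integrable (fun p : (Fin n → Ω) × (Fin n → Ω) => H ε p.1) (Q.prod Q) :=
      (hHi ε).comp_fst Q
    have i3 : Integrable (fun p : (Fin n → Ω) × (Fin n → Ω) => H (fun k => !(ε k)) p.2)
      (Q.prod Q) := (hHi _).comp_snd Q
    rw [h1, h2, h3, ← integral_add i2 i3]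
    apply integral_mono
    · exact integrable_of_bdd _ (hFm.comp hsw.measurable) _ fun p => hFb _
    · exact i2.add i3
    · intro p
      apply ciSup_le
      intro i
      have h4 : ∑ k : Fin n, (f i (if ε k then p.1 k else p.2 k) -
          f i (if ε k then p.2 k else p.1 k)) =
          ∑ k : Fin n, radSgn (ε k) * f i (p.1 k) + ∑ k : Fin n, radSgn (!(ε k)) * f i (p.2 k) := by
        rw [← Finset.sum_add_distrib]
        apply Finset.sum_congr rfl
        intro k _
        by_cases h : ε k = true
        · simp [h, radSgn]; ring
        · simp [h, radSgn]; ring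
      simp only
      rw [h4]
      apply add_le_add
      · exact le_ciSup (bdd_of_abs _ _ (hHb0 ε p.1)) i
      · exact le_ciSup (bdd_of_abs _ _ (hHb0 (fun k => !(ε k)) p.2)) i
  have hsum : (2 : ℝ) ^ n * ∫ p, F p ∂(Q.prod Q) ≤ 2 * ∑ ε : Fin n → Bool, ∫ ω, H ε ω ∂Q := by
    have h1 : ∑ _ε : Fin n → Bool, ∫ p, F p ∂(Q.prod Q) ≤
        ∑ ε : Fin n → Bool, (∫ ω, H ε ω ∂Q + ∫ ω, H (fun k => !(ε k)) ω ∂Q) :=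
      Finset.sum_le_sum fun ε _ => hb ε
    rw [Finset.sum_add_distrib] at h1
    have h2 : ∑ ε : Fin n → Bool, ∫ ω, H (fun k => !(ε k)) ω ∂Q =
        ∑ ε : Fin n → Bool, ∫ ω, H ε ω ∂Q :=
      Fintype.sum_equiv (Equiv.arrowCongr (Equiv.refl _) Equiv.boolNot) _ _ (fun ε => rfl)
    rw [h2] at h1
    simp only [Finset.sum_const, Finset.card_univ, Fintype.card_fun, Fintype.card_bool,
      Fintype.card_fin, nsmul_eq_mul] at h1
    push_cast at h1
    linarith
  have hrad : ∫ ω, radAvg (fun ε => H ε ω) ∂Q = (∑ ε : Fin n → Bool, ∫ ω, H ε ω ∂Q) / 2 ^ n := by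
    unfold radAvg
    rw [integral_div, integral_finsetSum _ fun ε _ => hHi ε]
  refine ha.trans ?_
  change _ ≤ 2 * ∫ ω, radAvg (fun ε => H ε ω) ∂Q
  rw [hrad, ← mul_div_assoc, le_div_iff₀ (by positivity)]
  linarith

lemma cond_aux {n : ℕ} (hn : 0 < n) {ι : Type*} [Nonempty ι] (a : ι → Fin n → ℝ)
    (h01 : ∀ i k, a i k = 0 ∨ a i k = 1) (V : ℕ) (hV0 : 0 < V)
    (hV : ∀ x : Fin (V + 1) → Fin n, ¬ Shatters (Set.range a) x) (i₀ : ι)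
    (v : Fin n → ℝ) (B R : ℝ) (hB : 0 < B) (hR : 0 < R) (hv : ∀ k, |v k| ≤ B)
    (hrad : ∀ i, ∑ k, ((a i k - a i₀ k) * v k) ^ 2 ≤ n * R ^ 2) :
    radAvg (fun ε => ⨆ i, ∑ k, radSgn (ε k) * ((a i k - a i₀ k) * v k)) ≤
      28 * R * √(n * (V * (1 + Real.log (max (B / R) 1)))) := by
  classical
  have hfin : (Set.range a).Finite := by
    apply Set.Finite.subset (Set.Finite.pi' (fun _ : Fin n => Set.toFinite ({0, 1} : Set ℝ)))
    rintro _ ⟨i, rfl⟩ k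
    simpa using h01 i k
  set A := hfin.toFinset with hA
  have hmem : ∀ i, a i ∈ A := fun i => by simp [hA]
  have hA01 : ∀ g ∈ A, ∀ x, g x = 0 ∨ g x = 1 := by
    intro g hg x
    simp only [hA, Set.Finite.mem_toFinset] at hg
    obtain ⟨i, rfl⟩ := hg
    exact h01 i x
  have hAV : ∀ x : Fin (V + 1) → Fin n, ¬ Shatters (A : Set (Fin n → ℝ)) x := by
    simpa [hA] using hV
  have hle : radAvg (fun ε => ⨆ i, ∑ k, radSgn (ε k) * ((a i k - a i₀ k) * v k)) ≤
      radAvg (fun ε => A.sup' ⟨a i₀, hmem i₀⟩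
        (fun b => ∑ k, radSgn (ε k) * ((b k - a i₀ k) * v k))) := by
    apply radAvg_mono
    intro ε
    apply ciSup_le
    intro i
    exact Finset.le_sup' (fun b => ∑ k, radSgn (ε k) * ((b k - a i₀ k) * v k)) (hmem i)
  refine hle.trans ?_
  by_cases hRB : R ≤ B
  · rw [max_eq_left (by rw [le_div_iff₀ hR]; linarith)]
    apply chain_aux hn A hA01 V hV0 hAV (a i₀) (hmem i₀) v B R hR hRB hv
    intro b hb
    simp only [hA, Set.Finite.mem_toFinset] at hb
    obtain ⟨i, rfl⟩ := hb
    exact hrad i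
  · push Not at hRB
    rw [max_eq_right (by rw [div_le_one hR]; exact hRB.le)]
    have := chain_aux hn A hA01 V hV0 hAV (a i₀) (hmem i₀) v B B hB le_rfl hv (by
      intro b hb
      refine (dist_aux b (a i₀) v (hA01 b hb) (h01 i₀) B hv).trans ?_
      rw [mul_comm]
      gcongr
      exact_mod_cast (Finset.card_filter_le _ _).trans (by simp))
    rw [div_self hB.ne'] at this
    refine this.trans ?_
    gcongr

lemma max_aux {Ω α : Type*} [MeasurableSpace Ω] [MeasurableSpace α] (P : Measure Ω)
    [IsProbabilityMeasure P] (X : Ω → α) (hX : Measurable X) {ι : Type*} [Countable ι]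
    (g : ι → α → ℝ) (hg : ∀ i, IsClassifier (g i)) (i₀ : ι) (V : ℕ) (hV0 : 0 < V)
    (hV : ∀ x : Fin (V + 1) → α, ¬ Shatters (Set.range g) x)
    (v : Ω → ℝ) (hvm : Measurable v) (B : ℝ) (hB : 0 < B) (hv : ∀ ω, |v ω| ≤ B)
    (n : ℕ) (hn : 0 < n) (R : (Fin n → Ω) → ℝ)
    (hR : Integrable R (Measure.pi fun _ : Fin n => P)) (R₀ : ℝ) (hR₀ : 0 < R₀)
    (hRR : ∀ ω, R₀ ≤ R ω)
    (hrad : ∀ ω i, ∑ k, ((g i (X (ω k)) - g i₀ (X (ω k))) * v (ω k)) ^ 2 ≤ n * R ω ^ 2) :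
    ∫ ω, (⨆ i, ∑ k : Fin n, ((g i (X (ω k)) - g i₀ (X (ω k))) * v (ω k) -
        ∫ ω', (g i (X ω') - g i₀ (X ω')) * v ω' ∂P)) ∂(Measure.pi fun _ : Fin n => P) ≤
      56 * √(n * (V * (1 + Real.log (max (B / R₀) 1)))) *
        ∫ ω, R ω ∂(Measure.pi fun _ : Fin n => P) := by
  haveI : Nonempty ι := ⟨i₀⟩
  have hgX : ∀ i, Measurable fun ω => g i (X ω) := fun i => (hg i).1.comp hX
  have hfm : ∀ i, Measurable fun ω => (g i (X ω) - g i₀ (X ω)) * v ω := fun i =>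
    ((hgX i).sub (hgX i₀)).mul hvm
  have hfb : ∀ i ω, |(g i (X ω) - g i₀ (X ω)) * v ω| ≤ B := by
    intro i ω
    rw [abs_mul]
    have h1 : |g i (X ω) - g i₀ (X ω)| ≤ 1 := by
      rcases (hg i).2 (X ω) with h | h <;> rcases (hg i₀).2 (X ω) with h' | h' <;> simp [h, h']
    calc _ ≤ 1 * B := by gcongr; exact hv ω
      _ = B := one_mul B
  refine (symm_aux P (fun i ω => (g i (X ω) - g i₀ (X ω)) * v ω) hfm B hfb n).trans ?_
  rw [show (56 : ℝ) = 2 * 28 by norm_num, mul_assoc, mul_assoc 2]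
  refine mul_le_mul_of_nonneg_left ?_ (by norm_num)
  rw [← mul_assoc, ← integral_const_mul]
  apply integral_mono_of_nonneg
  · apply ae_of_all
    intro ω
    unfold radAvg
    apply div_nonneg _ (by positivity)
    apply Finset.sum_nonneg
    intro ε _
    have hb : BddAbove (Set.range fun i => ∑ k : Fin n,
        radSgn (ε k) * ((g i (X (ω k)) - g i₀ (X (ω k))) * v (ω k))) := by
      apply bdd_of_abs _ (n * B)
      intro i
      apply abs_sum_le_card
      intro k
      rw [abs_mul, radSgn_abs, one_mul]
      exact hfb i _
    refine le_trans (le_of_eq ?_) (le_ciSup hb i₀)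
    simp
  · exact hR.const_mul _
  · apply ae_of_all
    intro ω
    have hRω : 0 < R ω := lt_of_lt_of_le hR₀ (hRR ω)
    have := cond_aux hn (fun i k => g i (X (ω k))) (fun i k => (hg i).2 _) V hV0 (by
      intro x hx
      apply hV (fun j => X (ω (x j)))
      intro b
      obtain ⟨_, ⟨i, rfl⟩, h⟩ := hx b
      exact ⟨g i, ⟨i, rfl⟩, h⟩) i₀ (fun k => v (ω k)) B (R ω) hB hRω (fun k => hv _) (hrad ω)
    refine this.trans ?_
    simp only
    rw [mul_right_comm]
    gcongr
    exact hRR ω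

lemma pull_aux {Ω α : Type*} {mΩ : MeasurableSpace Ω} {mα : MeasurableSpace α} (P : Measure Ω)
    [IsProbabilityMeasure P] (X : Ω → α) (hX : Measurable X) (Y S : Ω → ℝ) (e : α → ℝ)
    (hY : Measurable Y) (hS : Measurable S)
    (hY01 : ∀ᵐ ω ∂P, Y ω = 0 ∨ Y ω = 1) (hS01 : ∀ᵐ ω ∂P, S ω = 0 ∨ S ω = 1)
    (he : IsPropensity P X Y S e) (q : α → ℝ) (hq : Measurable q) (c : ℝ) (hc : ∀ x, |q x| ≤ c) :
    ∫ ω, q (X ω) * S ω ∂P = ∫ ω, q (X ω) * (e (X ω) * Y ω) ∂P := by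
  obtain ⟨hem, he01, -, heq⟩ := he
  have heX : Measurable fun ω => e (X ω) := hem.comp hX
  have iS : Integrable S P := by
    apply Integrable.of_bound hS.aestronglyMeasurable 1
    filter_upwards [hS01] with ω h
    rcases h with h | h <;> simp [h]
  have iY : Integrable (fun ω => e (X ω) * Y ω) P := by
    apply Integrable.of_bound (heX.mul hY).aestronglyMeasurable 1
    filter_upwards [hY01] with ω h
    have := he01 (X ω)
    change ‖e (X ω) * Y ω‖ ≤ 1
    rcases h with h | h
    · simp [h]
    · simp only [h, mul_one, Real.norm_eq_abs]
      rw [abs_le]; constructor <;> linarith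
  set D : Ω → ℝ := fun ω => S ω - e (X ω) * Y ω with hD
  have iD : Integrable D P := iS.sub iY
  have hmle : MeasurableSpace.comap X mα ≤ mΩ := hX.comap_le
  have hzero : (fun _ => (0 : ℝ)) =ᵐ[P] P[D | MeasurableSpace.comap X mα] := by
    apply ae_eq_condExp_of_forall_setIntegral_eq hmle iD
    · intros; exact integrableOn_zero
    · rintro s ⟨A, hA, rfl⟩ _
      rw [hD, integral_sub iS.integrableOn iY.integrableOn, heq A hA]
      simp
    · exact aestronglyMeasurable_const
  have hqX : StronglyMeasurable[MeasurableSpace.comap X mα] fun ω => q (X ω) :=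
    (hq.comp (comap_measurable X)).stronglyMeasurable
  have hpo := condExp_stronglyMeasurable_mul_of_bound hmle (μ := P) hqX iD c
    (ae_of_all _ fun ω => by simpa using hc (X ω))
  have h0 : ∫ ω, q (X ω) * D ω ∂P = 0 := by
    have h1 := integral_condExp (μ := P) (f := (fun ω => q (X ω)) * D) hmle
    have h2 : ∫ ω, ((fun ω => q (X ω)) * D) ω ∂P = ∫ ω, q (X ω) * D ω ∂P := rfl
    rw [← h2, ← h1]
    rw [integral_congr_ae (g := fun _ => 0)]
    · simp
    · filter_upwards [hpo, hzero] with ω ha hb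
      rw [ha, Pi.mul_apply, ← hb, mul_zero]
  have hqm : AEStronglyMeasurable (fun ω => q (X ω)) P := (hq.comp hX).aestronglyMeasurable
  have hqb : ∀ᵐ ω ∂P, ‖q (X ω)‖ ≤ c := ae_of_all _ fun ω => by simpa using hc (X ω)
  have i1 : Integrable (fun ω => q (X ω) * S ω) P := iS.bdd_mul hqm hqb
  have i2 : Integrable (fun ω => q (X ω) * (e (X ω) * Y ω)) P := iY.bdd_mul hqm hqb
  have h3 : ∫ ω, q (X ω) * D ω ∂P = ∫ ω, q (X ω) * S ω ∂P - ∫ ω, q (X ω) * (e (X ω) * Y ω) ∂P := by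
    rw [← integral_sub i1 i2]
    congr 1
    funext ω
    simp only [hD]; ring
  linarith

/-- the multiplier `2·1{S=1}/e(X) − 1` -/
def sarU {Ω α : Type*} (X : Ω → α) (S : Ω → ℝ) (e : α → ℝ) (ω : Ω) : ℝ :=
  2 * ((if S ω = 1 then (1 : ℝ) else 0) / e (X ω)) - 1

lemma sarU_meas {Ω α : Type*} [MeasurableSpace Ω] [MeasurableSpace α] (X : Ω → α)
    (hX : Measurable X) (S : Ω → ℝ) (hS : Measurable S) (e : α → ℝ) (he : Measurable e) :
    Measurable (sarU X S e) := by
  unfold sarU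
  have : Measurable fun ω => (if S ω = 1 then (1 : ℝ) else 0) :=
    Measurable.ite (hS (measurableSet_singleton 1)) measurable_const measurable_const
  exact ((this.div (he.comp hX)).const_mul 2).sub_const 1

lemma sarU_abs {Ω α : Type*} (X : Ω → α) (S : Ω → ℝ) (e : α → ℝ) (e_m : ℝ) (hem : 0 < e_m)
    (he : ∀ x, e_m ≤ e x) (he1 : ∀ x, e x ≤ 1) (ω : Ω) : |sarU X S e ω| ≤ 2 / e_m - 1 := by
  unfold sarU
  have h1 := he (X ω)
  have h2 := he1 (X ω)
  have h3 : 1 / e (X ω) ≤ 1 / e_m := one_div_le_one_div_of_le hem h1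
  have h4 : 1 ≤ 1 / e (X ω) := by rw [le_div_iff₀ (by linarith)]; linarith
  have h5 : 2 / e_m = 2 * (1 / e_m) := by ring
  rw [h5]
  split_ifs
  · rw [abs_le]; constructor <;> linarith
  · rw [zero_div, mul_zero, zero_sub, abs_neg, abs_one]; linarith

lemma rSAR_diff {Ω α : Type*} (X : Ω → α) (S : Ω → ℝ) (e : α → ℝ) (g g₀ : α → ℝ)
    (hg : ∀ x, g x = 0 ∨ g x = 1) (hg₀ : ∀ x, g₀ x = 0 ∨ g₀ x = 1) (ω : Ω) :
    rSAR e g₀ (X ω, S ω) - rSAR e g (X ω, S ω) = (g (X ω) - g₀ (X ω)) * sarU X S e ω := by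
  unfold rSAR sarU
  rcases hg (X ω) with h | h <;> rcases hg₀ (X ω) with h' | h' <;> simp [h, h'] <;> ring

lemma rSAR_mean {Ω α : Type*} [MeasurableSpace Ω] [MeasurableSpace α] (P : Measure Ω)
    [IsProbabilityMeasure P] (X : Ω → α) (hX : Measurable X) (Y S : Ω → ℝ) (e : α → ℝ)
    (hY : Measurable Y) (hS : Measurable S)
    (hY01 : ∀ᵐ ω ∂P, Y ω = 0 ∨ Y ω = 1) (hS01 : ∀ᵐ ω ∂P, S ω = 0 ∨ S ω = 1)
    (he : IsPropensity P X Y S e) (e_m : ℝ) (hem : 0 < e_m) (hee : ∀ x, e_m ≤ e x)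
    (g g₀ : α → ℝ) (hg : IsClassifier g) (hg₀ : IsClassifier g₀) :
    ∫ ω, (g (X ω) - g₀ (X ω)) * sarU X S e ω ∂P = risk P X Y g₀ - risk P X Y g := by
  have hpos : ∀ x, 0 < e x := fun x => hem.trans_le (hee x)
  have hinv : ∀ x, (e x)⁻¹ ≤ e_m⁻¹ := fun x => inv_anti₀ hem (hee x)
  have hdb : ∀ x, |g x - g₀ x| ≤ 1 := fun x => by
    rcases hg.2 x with h | h <;> rcases hg₀.2 x with h' | h' <;> simp [h, h']
  have hgX : Measurable fun ω => g (X ω) := hg.1.comp hX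
  have hgX₀ : Measurable fun ω => g₀ (X ω) := hg₀.1.comp hX
  have heX : Measurable fun ω => e (X ω) := he.1.comp hX
  set q : α → ℝ := fun x => (g x - g₀ x) * (2 * (e x)⁻¹) with hq
  have hqm : Measurable q := (hg.1.sub hg₀.1).mul (he.1.inv.const_mul 2)
  have hqb : ∀ x, |q x| ≤ 2 * e_m⁻¹ := fun x => by
    simp only [hq]
    rw [abs_mul, abs_of_nonneg (show 0 ≤ 2 * (e x)⁻¹ by have := hpos x; positivity)]
    have := hinv x
    have h3 : 0 ≤ 2 * (e x)⁻¹ := by have := hpos x; positivity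
    nlinarith [hdb x, abs_nonneg (g x - g₀ x)]
  have hp := pull_aux P X hX Y S e hY hS hY01 hS01 he q hqm _ hqb
  have i1 : Integrable (fun ω => q (X ω) * S ω) P := by
    apply Integrable.of_bound ((hqm.comp hX).mul hS).aestronglyMeasurable (2 * e_m⁻¹)
    filter_upwards [hS01] with ω h
    change ‖q (X ω) * S ω‖ ≤ _
    rcases h with h | h
    · simp [h]; positivity
    · simpa [h] using hqb (X ω)
  have i2 : Integrable (fun ω => g (X ω) - g₀ (X ω)) P :=
    integrable_of_bdd P (hgX.sub hgX₀) 1 fun ω => hdb _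
  have i3 : Integrable (fun ω => q (X ω) * (e (X ω) * Y ω)) P := by
    apply Integrable.of_bound ((hqm.comp hX).mul (heX.mul hY)).aestronglyMeasurable (2 * e_m⁻¹)
    filter_upwards [hY01] with ω h
    have := he.2.1 (X ω)
    change ‖q (X ω) * (e (X ω) * Y ω)‖ ≤ _
    rcases h with h | h
    · simp [h]; positivity
    · simp only [Real.norm_eq_abs, h, mul_one, abs_mul, Function.comp]
      rw [abs_of_nonneg this.1]
      have := hqb (X ω)
      have h3 := abs_nonneg (q (X ω))
      nlinarith
  have h1 : ∫ ω, (g (X ω) - g₀ (X ω)) * sarU X S e ω ∂P =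
      ∫ ω, q (X ω) * S ω ∂P - ∫ ω, (g (X ω) - g₀ (X ω)) ∂P := by
    rw [← integral_sub i1 i2]
    apply integral_congr_ae
    filter_upwards [hS01] with ω h
    unfold sarU
    simp only [hq]
    rcases h with h | h <;> simp [h] <;> ring
  have hr : ∀ g : α → ℝ, IsClassifier g →
      risk P X Y g = ∫ ω, (if g (X ω) ≠ Y ω then (1 : ℝ) else 0) ∂P ∧
      Integrable (fun ω => if g (X ω) ≠ Y ω then (1 : ℝ) else 0) P := by
    intro g hg
    have hms : MeasurableSet {ω | g (X ω) ≠ Y ω} :=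
      (measurableSet_eq_fun (hg.1.comp hX) hY).compl
    constructor
    · unfold risk
      have := integral_indicator_one (μ := P) hms
      rw [measureReal_def] at this
      rw [← this]
      congr 1
      funext ω
      by_cases h : g (X ω) = Y ω <;> simp [Set.indicator, h]
    · apply integrable_of_bdd P (Measurable.ite hms measurable_const measurable_const) 1
      intro ω
      split_ifs <;> simp
  rw [h1, hp, (hr g hg).1, (hr g₀ hg₀).1, ← integral_sub (hr g₀ hg₀).2 (hr g hg).2,
    ← integral_sub i3 i2]
  apply integral_congr_ae
  filter_upwards [hY01] with ω h
  simp only [hq]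
  have hx := (hpos (X ω)).ne'
  have h5 : (g (X ω) - g₀ (X ω)) * (2 * (e (X ω))⁻¹) * (e (X ω) * Y ω) =
    2 * (g (X ω) - g₀ (X ω)) * Y ω := by field_simp
  rw [h5]
  rcases hg.2 (X ω) with h1 | h1 <;> rcases hg₀.2 (X ω) with h2 | h2 <;>
    rcases h with h | h <;> simp [h1, h2, h] <;> norm_num

lemma sar_var {Ω α : Type*} [MeasurableSpace Ω] [MeasurableSpace α] (P : Measure Ω)
    [IsProbabilityMeasure P] (X : Ω → α) (hX : Measurable X) (Y S : Ω → ℝ) (e : α → ℝ)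
    (hY : Measurable Y) (hS : Measurable S)
    (hY01 : ∀ᵐ ω ∂P, Y ω = 0 ∨ Y ω = 1) (hS01 : ∀ᵐ ω ∂P, S ω = 0 ∨ S ω = 1)
    (he : IsPropensity P X Y S e) (e_m : ℝ) (hem : 0 < e_m) (hee : ∀ x, e_m ≤ e x)
    (g g₀ : α → ℝ) (hg : IsClassifier g) (hg₀ : IsClassifier g₀) :
    ∫ ω, ((g (X ω) - g₀ (X ω)) * sarU X S e ω) ^ 2 ∂P ≤
      2 * (2 / e_m - 1) * ∫ ω, |g (X ω) - g₀ (X ω)| ^ 2 ∂P := by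
  have hpos : ∀ x, 0 < e x := fun x => hem.trans_le (hee x)
  have hinv : ∀ x, (e x)⁻¹ ≤ e_m⁻¹ := fun x => inv_anti₀ hem (hee x)
  have hinv1 : ∀ x, 1 ≤ (e x)⁻¹ := fun x => (one_le_inv₀ (hpos x)).2 (he.2.1 x).2
  have hdb : ∀ x, (g x - g₀ x) ^ 2 ≤ 1 := fun x => by
    rcases hg.2 x with h | h <;> rcases hg₀.2 x with h' | h' <;> simp [h, h']
  have hgX : Measurable fun ω => g (X ω) := hg.1.comp hX
  have hgX₀ : Measurable fun ω => g₀ (X ω) := hg₀.1.comp hX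
  have heX : Measurable fun ω => e (X ω) := he.1.comp hX
  set q : α → ℝ := fun x => (g x - g₀ x) ^ 2 * (4 * (e x)⁻¹ * ((e x)⁻¹ - 1)) with hq
  have hqm : Measurable q := ((hg.1.sub hg₀.1).pow_const 2).mul
    ((he.1.inv.const_mul 4).mul (he.1.inv.sub_const 1))
  have hqb : ∀ x, |q x| ≤ 4 * e_m⁻¹ * (e_m⁻¹ - 1) := fun x => by
    have h1 := hinv1 x
    have h2 := hinv x
    have h3 : 0 ≤ (e x)⁻¹ - 1 := by linarith
    have h4 : 0 ≤ 4 * (e x)⁻¹ * ((e x)⁻¹ - 1) := by positivity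
    simp only [hq]
    rw [abs_of_nonneg (by positivity)]
    calc _ ≤ 1 * (4 * (e x)⁻¹ * ((e x)⁻¹ - 1)) := by gcongr; exact hdb x
      _ ≤ _ := by rw [one_mul]; gcongr
  have hc0 : 0 ≤ 4 * e_m⁻¹ * (e_m⁻¹ - 1) := by
    have : Nonempty Ω := nonempty_of_isProbabilityMeasure P
    obtain ⟨ω⟩ := this
    exact (abs_nonneg _).trans (hqb (X ω))
  have hp := pull_aux P X hX Y S e hY hS hY01 hS01 he q hqm _ hqb
  have i1 : Integrable (fun ω => q (X ω) * S ω) P := by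
    apply Integrable.of_bound ((hqm.comp hX).mul hS).aestronglyMeasurable (4 * e_m⁻¹ * (e_m⁻¹ - 1))
    filter_upwards [hS01] with ω h
    change ‖q (X ω) * S ω‖ ≤ _
    rcases h with h | h
    · simp only [h, mul_zero, norm_zero]; exact hc0
    · simpa [h] using hqb (X ω)
  have i2 : Integrable (fun ω => (g (X ω) - g₀ (X ω)) ^ 2) P :=
    integrable_of_bdd P ((hgX.sub hgX₀).pow_const 2) 1 fun ω => by
      rw [abs_of_nonneg (sq_nonneg _)]; exact hdb _
  have i3 : Integrable (fun ω => q (X ω) * (e (X ω) * Y ω)) P := by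
    apply Integrable.of_bound ((hqm.comp hX).mul (heX.mul hY)).aestronglyMeasurable
      (4 * e_m⁻¹ * (e_m⁻¹ - 1))
    filter_upwards [hY01] with ω h
    have := he.2.1 (X ω)
    change ‖q (X ω) * (e (X ω) * Y ω)‖ ≤ _
    rcases h with h | h
    · simp only [h, mul_zero, norm_zero]; exact hc0
    · simp only [Real.norm_eq_abs, h, mul_one, abs_mul, Function.comp]
      rw [abs_of_nonneg this.1]
      have := hqb (X ω)
      have h3 := abs_nonneg (q (X ω))
      nlinarith
  have h1 : ∫ ω, ((g (X ω) - g₀ (X ω)) * sarU X S e ω) ^ 2 ∂P =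
      ∫ ω, q (X ω) * S ω ∂P + ∫ ω, (g (X ω) - g₀ (X ω)) ^ 2 ∂P := by
    rw [← integral_add i1 i2]
    apply integral_congr_ae
    filter_upwards [hS01] with ω h
    unfold sarU
    simp only [hq]
    rcases h with h | h <;> simp [h] <;> ring
  simp only [sq_abs]
  rw [h1, hp, ← integral_const_mul, ← integral_add i3 i2]
  apply integral_mono_ae (i3.add i2) (i2.const_mul _)
  filter_upwards [hY01] with ω h
  simp only [Pi.add_apply, hq]
  have hx := (hpos (X ω)).ne'
  have h5 : (g (X ω) - g₀ (X ω)) ^ 2 * (4 * (e (X ω))⁻¹ * ((e (X ω))⁻¹ - 1)) * (e (X ω) * Y ω) =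
    (g (X ω) - g₀ (X ω)) ^ 2 * (4 * ((e (X ω))⁻¹ - 1) * Y ω) := by field_simp
  rw [h5, div_eq_mul_inv]
  have h6 := hinv (X ω)
  have h7 := hinv1 (X ω)
  have h8 : 4 * ((e (X ω))⁻¹ - 1) * Y ω + 1 ≤ 2 * (2 * e_m⁻¹ - 1) := by
    rcases h with h | h <;> rw [h] <;> linarith
  nlinarith [sq_nonneg (g (X ω) - g₀ (X ω))]


lemma core_aux {Ω α : Type*} [MeasurableSpace Ω] [MeasurableSpace α] (P : Measure Ω)
    [IsProbabilityMeasure P] (X : Ω → α) (hX : Measurable X) {ι : Type*} [Countable ι]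
    (g : ι → α → ℝ) (hg : ∀ i, IsClassifier (g i)) (i₀ : ι) (V : ℕ) (hV0 : 0 < V)
    (hV : ∀ x : Fin (V + 1) → α, ¬ Shatters (Set.range g) x)
    (u : Ω → ℝ) (hum : Measurable u) (C : ℝ) (hC : 0 < C) (hu : ∀ ω, |u ω| ≤ C)
    (n : ℕ) (hn : 0 < n) (σ : ℝ) (hσ : 0 < σ)
    (hvar : ∀ i, ∫ ω, ((g i (X ω) - g i₀ (X ω)) * u ω) ^ 2 ∂P ≤ σ ^ 2)
    (hΦ : 224 * C * √(V * (1 + Real.log (max (C / σ) 1))) ≤ √n * σ) :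
    ∫ ω, (⨆ i, ∑ k : Fin n, ((g i (X (ω k)) - g i₀ (X (ω k))) * u (ω k) -
        ∫ ω', (g i (X ω') - g i₀ (X ω')) * u ω' ∂P)) ∂(Measure.pi fun _ : Fin n => P) ≤
      224 * σ * (√n * √(V * (1 + Real.log (max (C / σ) 1)))) := by
  haveI : Nonempty ι := ⟨i₀⟩
  have hn' : (0 : ℝ) < n := by exact_mod_cast hn
  have hgX : ∀ i, Measurable fun ω => g i (X ω) := fun i => (hg i).1.comp hX
  have hum2 : ∀ ω, u ω ^ 2 ≤ C ^ 2 := fun ω => sq_le_sq' (by linarith [(abs_le.1 (hu ω)).1])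
    (abs_le.1 (hu ω)).2
  have hd2 : ∀ i x, (g i x - g i₀ x) ^ 2 ≤ 1 := fun i x => by
    rcases (hg i).2 x with h | h <;> rcases (hg i₀).2 x with h' | h' <;> simp [h, h']
  set f : ι → Ω → ℝ := fun i ω => ((g i (X ω) - g i₀ (X ω)) * u ω) ^ 2 with hf
  have hfm : ∀ i, Measurable (f i) := fun i =>
    (((hgX i).sub (hgX i₀)).mul hum).pow_const 2
  have hf0 : ∀ i ω, 0 ≤ f i ω := fun i ω => sq_nonneg _
  have hfC : ∀ i ω, f i ω ≤ C ^ 2 := fun i ω => by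
    simp only [hf, mul_pow]
    calc _ ≤ 1 * C ^ 2 := mul_le_mul (hd2 _ _) (hum2 ω) (sq_nonneg _) zero_le_one
      _ = _ := one_mul _
  have hfb : ∀ i ω, |f i ω| ≤ C ^ 2 := fun i ω => by rw [abs_of_nonneg (hf0 i ω)]; exact hfC i ω
  set Q : Measure (Fin n → Ω) := Measure.pi fun _ : Fin n => P with hQ
  set s : (Fin n → Ω) → ℝ := fun ω => ⨆ i, ∑ k, f i (ω k) with hs
  have hsb : ∀ ω : Fin n → Ω, ∀ i, |∑ k, f i (ω k)| ≤ n * C ^ 2 := fun ω i =>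
    abs_sum_le_card _ _ fun k => hfb i _
  have hsum : ∀ i, Measurable fun ω : Fin n → Ω => ∑ k, f i (ω k) := fun i =>
    Finset.measurable_sum _ fun k _ => (hfm i).comp (measurable_pi_apply k)
  have hsm : Measurable s := Measurable.iSup hsum
  have his : Integrable s Q := integrable_of_bdd Q hsm (n * C ^ 2) fun ω =>
    abs_ciSup_le' _ _ (hsb ω)
  have hles : ∀ ω i, ∑ k, f i (ω k) ≤ s ω := fun ω i => le_ciSup (bdd_of_abs _ _ (hsb ω)) i
  have hs0 : ∀ ω, 0 ≤ s ω := fun ω =>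
    (Finset.sum_nonneg fun k _ => hf0 i₀ (ω k)).trans (hles ω i₀)
  set R : (Fin n → Ω) → ℝ := fun ω => σ + s ω / (n * σ) with hR
  have iR : Integrable R Q := (integrable_const σ).add (his.div_const _)
  have hRσ : ∀ ω, σ ≤ R ω := fun ω => by
    have := hs0 ω
    simp only [hR]
    have : 0 ≤ s ω / (n * σ) := by positivity
    linarith
  have hsR : ∀ ω, s ω ≤ n * R ω ^ 2 := fun ω => by
    have h0 := hs0 ω
    have h1 : s ω = n * (σ * (s ω / (n * σ))) := by field_simp
    have h2 : 0 ≤ s ω / (n * σ) := by positivity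
    simp only [hR]
    conv_lhs => rw [h1]
    gcongr
    nlinarith
  set L : ℝ := V * (1 + Real.log (max (C / σ) 1)) with hL
  have hsq : √((n : ℝ) * L) = √n * √L := Real.sqrt_mul hn'.le _
  set 𝔅 : ℝ := (∫ ω, s ω ∂Q) / n with h𝔅
  have hIR : ∫ ω, R ω ∂Q = σ + 𝔅 / σ := by
    simp only [hR]
    rw [integral_add (integrable_const σ) (his.div_const _), integral_div, h𝔅]
    simp
    field_simp
  -- process 1
  have p1 := max_aux P X hX g hg i₀ V hV0 hV u hum C hC hu n hn R iR σ hσ hRσ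
    (fun ω i => (hles ω i).trans (hsR ω))
  -- process 2
  have e2 : ∀ i ω, (g i (X ω) - g i₀ (X ω)) * (u ω ^ 2 * (1 - 2 * g i₀ (X ω))) = f i ω := by
    intro i ω
    simp only [hf]
    rcases (hg i).2 (X ω) with h | h <;> rcases (hg i₀).2 (X ω) with h' | h' <;>
      simp [h, h'] <;> ring
  have p2 := max_aux P X hX g hg i₀ V hV0 hV (fun ω => u ω ^ 2 * (1 - 2 * g i₀ (X ω)))
    ((hum.pow_const 2).mul (measurable_const.sub ((hgX i₀).const_mul 2))) (C ^ 2) (by positivity)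
    (fun ω => by
      have : |1 - 2 * g i₀ (X ω)| = 1 := by
        rcases (hg i₀).2 (X ω) with h' | h' <;> simp [h'] <;> norm_num
      rw [abs_mul, this, mul_one, abs_of_nonneg (sq_nonneg _)]; exact hum2 ω)
    n hn (fun ω => C * R ω) (iR.const_mul C) (C * σ) (by positivity)
    (fun ω => by have := hRσ ω; gcongr)
    (fun ω i => by
      simp only [e2]
      calc ∑ k, f i (ω k) ^ 2 ≤ ∑ k, C ^ 2 * f i (ω k) := by
            gcongr with k
            rw [sq]
            exact mul_le_mul_of_nonneg_right (hfC i _) (hf0 i _)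
        _ = C ^ 2 * ∑ k, f i (ω k) := by rw [Finset.mul_sum]
        _ ≤ C ^ 2 * (n * R ω ^ 2) := by gcongr; exact (hles ω i).trans (hsR ω)
        _ = _ := by ring)
  simp only [e2] at p2
  rw [show C ^ 2 / (C * σ) = C / σ by field_simp, integral_const_mul, ← hQ, ← hL, hsq, hIR] at p2
  rw [← hQ, ← hL, hsq, hIR] at p1
  have hIf : ∀ i, |∫ ω', f i ω' ∂P| ≤ C ^ 2 := fun i => by
    rw [abs_of_nonneg (integral_nonneg (hf0 i))]
    calc ∫ ω', f i ω' ∂P ≤ ∫ _, C ^ 2 ∂P :=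
          integral_mono (integrable_of_bdd P (hfm i) _ (hfb i)) (integrable_const _) (hfC i)
      _ = C ^ 2 := by simp
  have hcb : ∀ (ω : Fin n → Ω) i, |∑ k, (f i (ω k) - ∫ ω', f i ω' ∂P)| ≤ n * (C ^ 2 + C ^ 2) :=
    fun ω i => abs_sum_le_card _ _ fun k => (abs_sub _ _).trans (add_le_add (hfb i _) (hIf i))
  have hcm : Measurable fun ω : Fin n → Ω => ⨆ i, ∑ k, (f i (ω k) - ∫ ω', f i ω' ∂P) :=
    Measurable.iSup fun i => Finset.measurable_sum _ fun k _ =>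
      ((hfm i).comp (measurable_pi_apply k)).sub_const _
  have icm : Integrable (fun ω : Fin n → Ω => ⨆ i, ∑ k, (f i (ω k) - ∫ ω', f i ω' ∂P)) Q :=
    integrable_of_bdd Q hcm _ fun ω => abs_ciSup_le' _ _ (hcb ω)
  have hsle : ∀ ω, s ω ≤ (⨆ i, ∑ k, (f i (ω k) - ∫ ω', f i ω' ∂P)) + n * σ ^ 2 := by
    intro ω
    refine ciSup_le fun i => ?_
    have h1 := le_ciSup (bdd_of_abs _ _ (hcb ω)) i
    simp only [Finset.sum_sub_distrib, Finset.sum_const, Finset.card_univ, Fintype.card_fin,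
      nsmul_eq_mul] at h1 ⊢
    have h2 : (n : ℝ) * ∫ ω', f i ω' ∂P ≤ n * σ ^ 2 := by gcongr; exact hvar i
    linarith
  have hB1 : ∫ ω, s ω ∂Q ≤ 56 * (√n * √L) * (C * (σ + 𝔅 / σ)) + n * σ ^ 2 := by
    calc ∫ ω, s ω ∂Q ≤ ∫ ω, ((⨆ i, ∑ k, (f i (ω k) - ∫ ω', f i ω' ∂P)) + n * σ ^ 2) ∂Q :=
          integral_mono his (icm.add (integrable_const _)) hsle
      _ = (∫ ω, (⨆ i, ∑ k, (f i (ω k) - ∫ ω', f i ω' ∂P)) ∂Q) + n * σ ^ 2 := by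
          rw [integral_add icm (integrable_const _)]; simp
      _ ≤ _ := by gcongr
  have h𝔅0 : 0 ≤ 𝔅 := div_nonneg (integral_nonneg hs0) hn'.le
  have hsn : ∫ ω, s ω ∂Q = n * 𝔅 := by rw [h𝔅]; field_simp
  have hτ : 0 ≤ 𝔅 / σ := by positivity
  have hB2 : 56 * (√n * √L) * (C * (σ + 𝔅 / σ)) ≤ n * (σ * (σ + 𝔅 / σ)) / 4 := by
    have : √n * (224 * C * √L) ≤ √n * (√n * σ) := by gcongr
    rw [← mul_assoc √n √n, Real.mul_self_sqrt hn'.le] at this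
    have h3 := mul_le_mul_of_nonneg_right this (show 0 ≤ σ + 𝔅 / σ by positivity)
    nlinarith
  have h4 : σ * (σ + 𝔅 / σ) = σ ^ 2 + 𝔅 := by field_simp
  rw [h4] at hB2
  have hB3 : 𝔅 ≤ 3 * σ ^ 2 := by
    have : n * 𝔅 ≤ n * (σ ^ 2 + (σ ^ 2 + 𝔅) / 4) := by
      rw [← hsn]; linarith
    have := le_of_mul_le_mul_left this hn'
    nlinarith [sq_nonneg σ]
  have hB4 : 𝔅 / σ ≤ 3 * σ := by rw [div_le_iff₀ hσ]; linarith
  calc _ ≤ _ := p1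
    _ ≤ 56 * (√n * √L) * (σ + 3 * σ) := by gcongr
    _ = _ := by ring


/-- **Proposition 3.** If `𝒮` has finite VC dimension `V`, `𝒮'` is a countable dense
subclass (separability assumption), the propensity satisfies `e(x) ≥ e_m > 0`, and
`C_e = 2/e_m − 1`, `d(g,g') = √(2 C_e)·√(E[|g(X) − g'(X)|²])`, then there is an absolute
constant `K ≥ 1` such that `Φ(σ) = K·σ·√(V·(1 + log(max(C_e/σ, 1))))` satisfies
`√n·E[sup_{g ∈ 𝒮', d(g,g₀) ≤ σ} (R̄ₙ(g₀) − R̄ₙ(g))] ≤ Φ(σ)` for all `g₀ ∈ 𝒮'` and every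
`σ > 0` with `Φ(σ) ≤ √n·σ²/C_e`. -/
theorem expected_sup_centered_empirical_process_le :
    ∃ K : ℝ, 1 ≤ K ∧
      ∀ (dim : ℕ) (Ω : Type) (_ : MeasurableSpace Ω) (P : Measure Ω)
        (_ : IsProbabilityMeasure P)
        (X : Ω → (Fin dim → ℝ)) (Y S : Ω → ℝ) (η e : (Fin dim → ℝ) → ℝ)
        (𝒮 𝒮' : Set ((Fin dim → ℝ) → ℝ)) (V n : ℕ) (e_m : ℝ),
        Measurable X → Measurable Y → Measurable S →
        (∀ᵐ ω ∂P, Y ω = 0 ∨ Y ω = 1) → (∀ᵐ ω ∂P, S ω = 0 ∨ S ω = 1) →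
        IsRegression P X Y η → IsPropensity P X Y S e →
        (∀ g ∈ 𝒮, IsClassifier g) →
        HasVCDim 𝒮 V → 0 < V → 0 < n →
        SeparableClass (rSAR e) 𝒮 𝒮' →
        0 < e_m → (∀ x, e_m ≤ e x) →
        ∀ g₀ ∈ 𝒮', ∀ σ : ℝ, 0 < σ →
          K * σ * Real.sqrt ((V : ℝ) * (1 + Real.log (max ((2 / e_m - 1) / σ) 1))) ≤
            Real.sqrt (n : ℝ) * σ ^ 2 / (2 / e_m - 1) →
          Real.sqrt (n : ℝ) *
            ∫ ω, (⨆ g : {g : (Fin dim → ℝ) → ℝ // g ∈ 𝒮' ∧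
                Real.sqrt (2 * (2 / e_m - 1)) *
                  Real.sqrt (∫ ω', |g (X ω') - g₀ (X ω')| ^ 2 ∂P) ≤ σ},
              ((empRisk (rSAR e) X S n g₀ ω - risk P X Y g₀) -
                (empRisk (rSAR e) X S n g.1 ω - risk P X Y g.1)))
            ∂(Measure.pi fun _ : Fin n => P) ≤
          K * σ * Real.sqrt ((V : ℝ) * (1 + Real.log (max ((2 / e_m - 1) / σ) 1))) := by
  refine ⟨224, by norm_num, ?_⟩
  intro dim Ω mΩ P hP X Y S η e 𝒮 𝒮' V n e_m hX hY hS hY01 hS01 _ he hcl hVC hV0 hn hsep hem hee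
    g₀ hg₀ σ hσ hΦ
  have hn' : (0 : ℝ) < n := by exact_mod_cast hn
  have hem1 : e_m ≤ 1 := (hee 0).trans (he.2.1 0).2
  have hC1 : 1 ≤ 2 / e_m - 1 := by
    have : 2 ≤ 2 / e_m := by rw [le_div_iff₀ hem]; linarith
    linarith
  have hua : ∀ ω, |sarU X S e ω| ≤ 2 / e_m - 1 := fun ω =>
    sarU_abs X S e e_m hem hee (fun x => (he.2.1 x).2) ω
  have hvar0 : ∀ g ∈ 𝒮', ∫ ω, ((g (X ω) - g₀ (X ω)) * sarU X S e ω) ^ 2 ∂P ≤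
      2 * (2 / e_m - 1) * ∫ ω, |g (X ω) - g₀ (X ω)| ^ 2 ∂P := fun g hg =>
    sar_var P X hX Y S e hY hS hY01 hS01 he e_m hem hee g g₀ (hcl g (hsep.1 hg))
      (hcl g₀ (hsep.1 hg₀))
  have hmean : ∀ g ∈ 𝒮', ∫ ω, (g (X ω) - g₀ (X ω)) * sarU X S e ω ∂P =
      risk P X Y g₀ - risk P X Y g := fun g hg =>
    rSAR_mean P X hX Y S e hY hS hY01 hS01 he e_m hem hee g g₀ (hcl g (hsep.1 hg))
      (hcl g₀ (hsep.1 hg₀))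
  set C : ℝ := 2 / e_m - 1 with hC
  have hC0 : 0 < C := by linarith
  haveI : Countable {g : (Fin dim → ℝ) → ℝ // g ∈ 𝒮' ∧
      √(2 * C) * √(∫ ω', |g (X ω') - g₀ (X ω')| ^ 2 ∂P) ≤ σ} :=
    (hsep.2.1.mono (fun g hg => hg.1 : {g : (Fin dim → ℝ) → ℝ | g ∈ 𝒮' ∧
      √(2 * C) * √(∫ ω', |g (X ω') - g₀ (X ω')| ^ 2 ∂P) ≤ σ} ⊆ 𝒮')).to_subtype
  have hcore := core_aux P X hX (ι := {g : (Fin dim → ℝ) → ℝ // g ∈ 𝒮' ∧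
      √(2 * C) * √(∫ ω', |g (X ω') - g₀ (X ω')| ^ 2 ∂P) ≤ σ}) (fun g => g.1)
    (fun g => hcl _ (hsep.1 g.2.1)) ⟨g₀, hg₀, by simpa using hσ.le⟩ V hV0
    (fun x hx => hVC.2 x fun b => by
      obtain ⟨g, ⟨i, rfl⟩, hi⟩ := hx b
      exact ⟨i.1, hsep.1 i.2.1, hi⟩)
    (sarU X S e) (sarU_meas X hX S hS e he.1) C hC0 hua n hn σ hσ
    (fun i => by
      refine (hvar0 i.1 i.2.1).trans ?_
      have h1 := i.2.2
      rw [← Real.sqrt_mul (by positivity)] at h1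
      exact (Real.sqrt_le_left hσ.le).1 h1)
    (by
      rw [le_div_iff₀ hC0] at hΦ
      have : σ * (224 * C * √(V * (1 + Real.log (max (C / σ) 1)))) ≤ σ * (√n * σ) := by
        calc _ = _ := by ring
          _ ≤ _ := hΦ
          _ = _ := by ring
      exact le_of_mul_le_mul_left this hσ)
  have heq : ∀ (ω : Fin n → Ω) (g : (Fin dim → ℝ) → ℝ), g ∈ 𝒮' →
      (empRisk (rSAR e) X S n g₀ ω - risk P X Y g₀) - (empRisk (rSAR e) X S n g ω - risk P X Y g) =
      (1 / (n : ℝ)) * ∑ k : Fin n, ((g (X (ω k)) - g₀ (X (ω k))) * sarU X S e (ω k) -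
        ∫ ω', (g (X ω') - g₀ (X ω')) * sarU X S e ω' ∂P) := by
    intro ω g hg
    rw [hmean g hg, Finset.sum_sub_distrib]
    simp only [← rSAR_diff X S e g g₀ (hcl g (hsep.1 hg)).2 (hcl g₀ (hsep.1 hg₀)).2]
    rw [Finset.sum_sub_distrib]
    simp only [empRisk, Finset.sum_const, Finset.card_univ, Fintype.card_fin, nsmul_eq_mul]
    field_simp
    ring
  have hIntg : (∫ ω, (⨆ g : {g : (Fin dim → ℝ) → ℝ // g ∈ 𝒮' ∧
      √(2 * C) * √(∫ ω', |g (X ω') - g₀ (X ω')| ^ 2 ∂P) ≤ σ},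
        ((empRisk (rSAR e) X S n g₀ ω - risk P X Y g₀) -
          (empRisk (rSAR e) X S n g.1 ω - risk P X Y g.1))) ∂(Measure.pi fun _ : Fin n => P)) =
      (1 / (n : ℝ)) * ∫ ω, (⨆ g : {g : (Fin dim → ℝ) → ℝ // g ∈ 𝒮' ∧
      √(2 * C) * √(∫ ω', |g (X ω') - g₀ (X ω')| ^ 2 ∂P) ≤ σ},
        ∑ k : Fin n, ((g.1 (X (ω k)) - g₀ (X (ω k))) * sarU X S e (ω k) -
        ∫ ω', (g.1 (X ω') - g₀ (X ω')) * sarU X S e ω' ∂P)) ∂(Measure.pi fun _ : Fin n => P) := by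
    rw [← integral_const_mul]
    congr 1
    funext ω
    rw [Real.mul_iSup_of_nonneg (by positivity)]
    congr 1
    funext g
    exact heq ω g.1 g.2.1
  rw [hIntg]
  calc _ ≤ √n * (1 / n * (224 * σ * (√n * √(V * (1 + Real.log (max (C / σ) 1)))))) := by
        gcongr
    _ = (√n * √n) / n * (224 * σ * √(V * (1 + Real.log (max (C / σ) 1)))) := by ring
    _ = _ := by rw [Real.mul_self_sqrt hn'.le, div_self hn'.ne', one_mul]
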